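/- Let $m\ge 1$, let $n_1,\dots,n_m$ be positive integers, let $\vec p=(p_1,\dots,p_m)$ with $1\le p_i\le\infty$, and let $\alpha>\sum_{i=1}^m n_i/p_i$. Then there is a constant $C$, depending only on $\alpha$, $\vec p$ and the $n_i$ (but not on $R$), such that for every $R>0$, $\Big\|\chi_{\{\sum_{i=1}^m|x_i|\ge R\}}(x_1,\dots,x_m)\,\big(\sum_{i=1}^m|x_i|\big)^{-\alpha}\Big\|_{L^{\vec p}}\le C\,R^{\,n_1/p_1+\cdots+n_m/p_m-\alpha}$, where $x_i\in\mathbb{R}^{n_i}$. -/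

import Mathlib

/-!
The proof bounds the tail function by a tensor product. Choose exponents `aᵢ > nᵢ / pᵢ`, `aᵢ > 0`,
with `∑ aᵢ = α`; this is possible because `α > ∑ nᵢ / pᵢ`. Where `S = ∑ |xᵢ| ≥ R`, each
`(R + |xᵢ|) / 2` is at most `S`, hence `S ^ (-α) = ∏ S ^ (-aᵢ) ≤ ∏ ((R + |xᵢ|) / 2) ^ (-aᵢ)`
(`tail_le_prod`). The mixed norm is monotone (`mixedNorm_mono`) and factorizes on tensor products
(`mixedNorm_const_mul_prod`), so the estimate reduces to one block of variables, where the scaling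
`x = R y` gives `‖((R + |x|) / 2) ^ (-a)‖_p = C R ^ (n / p - a)` with `C` finite as soon as
`a > n / p` (`lpNorm_bracket_le`; for `p = ∞` the supremum is at most `(R / 2) ^ (-a)`).
-/

open MeasureTheory ENNReal NNReal

namespace Paper

noncomputable def lpNorm {α : Type*} [MeasurableSpace α] (μ : Measure α) (p : ℝ≥0∞)
    (f : α → ℝ≥0∞) : ℝ≥0∞ :=
  if p = ∞ then essSup f μ else (∫⁻ a, f a ^ p.toReal ∂μ) ^ (1 / p.toReal)

noncomputable def mixedNorm : (m : ℕ) → (n : Fin m → ℕ) → (p : Fin m → ℝ≥0∞) →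
    (((i : Fin m) → EuclideanSpace ℝ (Fin (n i))) → ℝ≥0∞) → ℝ≥0∞
  | 0, _, _, f => f finZeroElim
  | m + 1, n, p, f =>
    mixedNorm m (fun i => n i.succ) (fun i => p i.succ)
      (fun xs => lpNorm volume (p 0)
        (fun x0 => f (Fin.cons (α := fun i => EuclideanSpace ℝ (Fin (n i))) x0 xs)))

theorem lpNorm_mono {α : Type*} [MeasurableSpace α] (μ : Measure α) (p : ℝ≥0∞)
    {f g : α → ℝ≥0∞} (h : ∀ x, f x ≤ g x) : lpNorm μ p f ≤ lpNorm μ p g := by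
  unfold lpNorm
  split_ifs
  · exact essSup_mono_ae (Filter.Eventually.of_forall h)
  · gcongr with x
    exact h x

theorem lpNorm_const_mul {α : Type*} [MeasurableSpace α] (μ : Measure α) {p : ℝ≥0∞}
    (hp : 1 ≤ p) (c : ℝ≥0∞) {f : α → ℝ≥0∞} (hf : Measurable f) :
    lpNorm μ p (fun x => c * f x) = c * lpNorm μ p f := by
  unfold lpNorm
  split_ifs with h
  · exact ENNReal.essSup_const_mul
  · have hq : 0 < p.toReal := ENNReal.toReal_pos (by positivity) h
    simp_rw [ENNReal.mul_rpow_of_nonneg _ _ hq.le]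
    rw [lintegral_const_mul _ (hf.pow_const _), ENNReal.mul_rpow_of_nonneg _ _ (by positivity),
      ← ENNReal.rpow_mul, mul_one_div_cancel hq.ne', ENNReal.rpow_one]

theorem mixedNorm_mono : ∀ (m : ℕ) (n : Fin m → ℕ) (p : Fin m → ℝ≥0∞)
    {f g : ((i : Fin m) → EuclideanSpace ℝ (Fin (n i))) → ℝ≥0∞},
    (∀ x, f x ≤ g x) → mixedNorm m n p f ≤ mixedNorm m n p g
  | 0, _, _, _, _, h => h _
  | m + 1, n, p, _, _, h =>
    mixedNorm_mono m (fun i => n i.succ) (fun i => p i.succ)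
      fun _ => lpNorm_mono _ _ fun _ => h _

/-- The mixed norm of a tensor product is the product of the norms of its factors. The constant `c`
collects the norms of the variables already integrated out in the induction on `m`. -/
theorem mixedNorm_const_mul_prod : ∀ (m : ℕ) (n : Fin m → ℕ) (p : Fin m → ℝ≥0∞)
    (_ : ∀ i, 1 ≤ p i) (g : (i : Fin m) → EuclideanSpace ℝ (Fin (n i)) → ℝ≥0∞)
    (_ : ∀ i, Measurable (g i)) (c : ℝ≥0∞),
    mixedNorm m n p (fun x => c * ∏ i, g i (x i)) = c * ∏ i, lpNorm volume (p i) (g i)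
  | 0, _, _, _, _, _, _ => by simp [mixedNorm]
  | m + 1, n, p, hp, g, hg, c => by
    have ih := mixedNorm_const_mul_prod m (fun i => n i.succ) (fun i => p i.succ)
      (fun i => hp _) (fun i => g i.succ) (fun i => hg _) (c * lpNorm volume (p 0) (g 0))
    rw [Fin.prod_univ_succ, ← mul_assoc, ← ih, mixedNorm]
    congr 1
    funext xs
    have : (fun x0 => c * ∏ i, g i
          (Fin.cons (α := fun i => EuclideanSpace ℝ (Fin (n i))) x0 xs i))
        = fun x0 => (c * ∏ i : Fin m, g i.succ (xs i)) * g 0 x0 := by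
      funext x0
      rw [Fin.prod_univ_succ]
      simp only [Fin.cons_zero, Fin.cons_succ]
      ring
    rw [this, lpNorm_const_mul _ (hp 0) _ (hg 0)]
    ring

theorem lintegral_comp_inv_smul {n : ℕ} {R : ℝ} (hR : 0 < R)
    {f : EuclideanSpace ℝ (Fin n) → ℝ≥0∞} (hf : Measurable f) :
    ∫⁻ x, f (R⁻¹ • x) = ENNReal.ofReal (R ^ n) * ∫⁻ x, f x := by
  rw [← lintegral_map hf (measurable_const_smul R⁻¹),
    Measure.map_addHaar_smul _ (inv_ne_zero hR.ne'), lintegral_smul_measure]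
  simp [abs_of_pos hR]

/-- The estimate for a single block of variables: for `p < ∞` it follows from the case
`R = 1` by scaling, and for `p = ∞` it is immediate from `R + |x| ≥ R`. -/
theorem lpNorm_bracket_le (n : ℕ) {p : ℝ≥0∞} (hp : 1 ≤ p) {a : ℝ} (ha0 : 0 < a)
    (ha : (n : ℝ) * (p⁻¹).toReal < a) :
    ∃ C : ℝ≥0, ∀ R : ℝ, 0 < R →
      lpNorm volume p (fun x : EuclideanSpace ℝ (Fin n) =>
        ENNReal.ofReal (((R + ‖x‖) / 2) ^ (-a)))
      ≤ C * ENNReal.ofReal (R ^ ((n : ℝ) * (p⁻¹).toReal - a)) := by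
  by_cases h : p = ∞
  · subst h
    refine ⟨((1 / 2 : ℝ) ^ (-a)).toNNReal, fun R hR => ?_⟩
    rw [lpNorm, if_pos rfl, ← ENNReal.ofReal, ← ENNReal.ofReal_mul (by positivity)]
    refine essSup_le_of_ae_le _ (Filter.Eventually.of_forall fun x => ?_)
    apply ENNReal.ofReal_le_ofReal
    simp only [inv_top, toReal_zero, mul_zero, zero_sub]
    rw [← Real.mul_rpow (by positivity) hR.le]
    apply Real.rpow_le_rpow_of_nonpos (by positivity) _ (by linarith)
    linarith [norm_nonneg x]
  · have hq : 0 < p.toReal := ENNReal.toReal_pos (by positivity) h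
    rw [ENNReal.toReal_inv] at ha
    have hI : (∫⁻ x : EuclideanSpace ℝ (Fin n),
        ENNReal.ofReal ((1 + ‖x‖) ^ (-(a * p.toReal)))) < ∞ := by
      apply finite_integral_one_add_norm
      rw [finrank_euclideanSpace_fin]
      rwa [← div_eq_mul_inv, div_lt_iff₀ hq] at ha
    set I := ∫⁻ x : EuclideanSpace ℝ (Fin n), ENNReal.ofReal ((1 + ‖x‖) ^ (-(a * p.toReal)))
      with hIdef
    have hfin : ENNReal.ofReal ((1 / 2 : ℝ) ^ (-a)) * I ^ (1 / p.toReal) ≠ ∞ :=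
      ENNReal.mul_ne_top ENNReal.ofReal_ne_top
        (ENNReal.rpow_ne_top_of_nonneg (by positivity) hI.ne)
    refine ⟨(ENNReal.ofReal ((1 / 2 : ℝ) ^ (-a)) * I ^ (1 / p.toReal)).toNNReal,
      fun R hR => le_of_eq ?_⟩
    rw [ENNReal.coe_toNNReal hfin, lpNorm, if_neg h]
    have key : ∀ x : EuclideanSpace ℝ (Fin n),
        ENNReal.ofReal (((R + ‖x‖) / 2) ^ (-a)) ^ p.toReal
        = ENNReal.ofReal ((R / 2) ^ (-(a * p.toReal))) *
          ENNReal.ofReal ((1 + ‖R⁻¹ • x‖) ^ (-(a * p.toReal))) := by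
      intro x
      rw [ENNReal.ofReal_rpow_of_nonneg (by positivity) hq.le, ← Real.rpow_mul (by positivity),
        ← ENNReal.ofReal_mul (by positivity), ← Real.mul_rpow (by positivity) (by positivity),
        norm_smul, Real.norm_of_nonneg (by positivity : (0 : ℝ) ≤ R⁻¹), neg_mul]
      congr 2
      field_simp
    simp_rw [key]
    rw [lintegral_const_mul _ (by fun_prop),
      lintegral_comp_inv_smul hR
        (f := fun x => ENNReal.ofReal ((1 + ‖x‖) ^ (-(a * p.toReal)))) (by fun_prop),
      ← hIdef, ← mul_assoc, ← ENNReal.ofReal_mul (by positivity),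
      ENNReal.mul_rpow_of_nonneg _ _ (by positivity),
      ENNReal.ofReal_rpow_of_nonneg (by positivity) (by positivity),
      mul_right_comm, ← ENNReal.ofReal_mul (by positivity)]
    congr 2
    rw [Real.mul_rpow (by positivity) (by positivity), ← Real.rpow_mul (by positivity),
      ← Real.rpow_natCast, ← Real.rpow_mul hR.le, ENNReal.toReal_inv, sub_eq_add_neg,
      Real.rpow_add hR, div_eq_mul_one_div R 2, Real.mul_rpow hR.le (by positivity)]
    have e : -(a * p.toReal) * (1 / p.toReal) = -a := by field_simp
    rw [e, one_div p.toReal]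
    ring

/-- The pointwise bound of the tail function by a tensor product. -/
theorem tail_le_prod {m : ℕ} {n : Fin m → ℕ} {a : Fin m → ℝ} (ha : ∀ i, 0 < a i)
    {R : ℝ} (hR : 0 < R) (x : (i : Fin m) → EuclideanSpace ℝ (Fin (n i))) :
    (if R ≤ ∑ i, ‖x i‖ then ENNReal.ofReal (∑ i, ‖x i‖) ^ (-(∑ i, a i)) else 0)
      ≤ ∏ i, ENNReal.ofReal (((R + ‖x i‖) / 2) ^ (-a i)) := by
  split_ifs with h
  · have hS : 0 < ∑ i, ‖x i‖ := hR.trans_le h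
    rw [ENNReal.ofReal_rpow_of_pos hS, ← Finset.sum_neg_distrib, Real.rpow_sum_of_pos hS,
      ENNReal.ofReal_prod_of_nonneg fun i _ => by positivity]
    refine Finset.prod_le_prod' fun i _ => ENNReal.ofReal_le_ofReal ?_
    refine Real.rpow_le_rpow_of_nonpos (by positivity) ?_ (by linarith [ha i])
    have := Finset.single_le_sum (f := fun i => ‖x i‖) (fun i _ => norm_nonneg _)
      (Finset.mem_univ i)
    linarith
  · exact zero_le

/-- Lemma (norm estimate): for `α > ∑ nᵢ/pᵢ`, the mixed norm of
`χ_{∑|xᵢ| ≥ R} (∑|xᵢ|)^{-α}` is `≲ R^{∑ nᵢ/pᵢ - α}`, with a constant independent of `R`. -/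
theorem tail_norm_estimate
    (m : ℕ) (hm : 1 ≤ m)
    (n : Fin m → ℕ) (hn : ∀ i, 1 ≤ n i)
    (p : Fin m → ℝ≥0∞) (hp : ∀ i, 1 ≤ p i)
    (α : ℝ) (hα : (∑ i, (n i : ℝ) * ((p i)⁻¹).toReal) < α) :
    ∃ C : ℝ≥0, ∀ R : ℝ, 0 < R →
      mixedNorm m n p (fun x =>
        if R ≤ ∑ i, ‖x i‖ then ENNReal.ofReal (∑ i, ‖x i‖) ^ (-α) else 0)
      ≤ C * ENNReal.ofReal (R ^ ((∑ i, (n i : ℝ) * ((p i)⁻¹).toReal) - α)) := by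
  have hm0 : (0 : ℝ) < m := by exact_mod_cast hm
  -- The excess of `α` over the critical exponent is shared equally among the blocks.
  set δ : ℝ := (α - ∑ i, (n i : ℝ) * ((p i)⁻¹).toReal) / m with hδ
  have hδ0 : 0 < δ := div_pos (by linarith) hm0
  set a : Fin m → ℝ := fun i => (n i : ℝ) * ((p i)⁻¹).toReal + δ with ha
  have hsum : ∑ i, a i = α := by
    simp only [ha, Finset.sum_add_distrib, Finset.sum_const, Finset.card_univ, Fintype.card_fin,
      nsmul_eq_mul, hδ]
    field_simp
    ring
  have ha0 : ∀ i, 0 < a i := fun i => by simp only [ha]; positivity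
  choose C hC using fun i => lpNorm_bracket_le (n i) (hp i) (ha0 i)
    (by simp only [ha]; linarith)
  refine ⟨∏ i, C i, fun R hR => ?_⟩
  have hfac := mixedNorm_const_mul_prod m n p hp
    (fun i x => ENNReal.ofReal (((R + ‖x‖) / 2) ^ (-a i))) (fun i => by fun_prop) 1
  simp only [one_mul] at hfac
  calc _ ≤ _ := mixedNorm_mono m n p fun x => by
        rw [← hsum]
        exact tail_le_prod ha0 hR x
    _ = _ := hfac
    _ ≤ ∏ i, ((C i : ℝ≥0∞) * ENNReal.ofReal (R ^ ((n i : ℝ) * ((p i)⁻¹).toReal - a i))) :=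
        Finset.prod_le_prod' fun i _ => hC i R hR
    _ = _ := by
        rw [Finset.prod_mul_distrib, ← ENNReal.ofReal_prod_of_nonneg fun i _ => by positivity,
          ← Real.rpow_sum_of_pos hR, Finset.sum_sub_distrib, hsum, ENNReal.ofNNReal_finsetProd]

end Paper
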